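/- arXiv:1910.06589 — 3 statements merged into one kernel-verified Lean document; each statement's English description precedes it below -/
import Mathlib

section
/- If θ is an angle function for α, then for all (s, v): φ_s(s,v) × φ_v(s,v) = −(sin θ(s) + v·g(s))·N(s) − v·f(s)·W(s), and ‖φ_s × φ_v‖² = v²f(s)² + (sin θ(s) + v·g(s))²; consequently, at every point where v²f(s)² + (sin θ(s) + v·g(s))² ≠ 0, the unit normal of the C-ruled surface is n(s,v) = (−(sin θ(s) + v·g(s))·N(s) − v·f(s)·W(s))/√(v²f(s)² + (sin θ(s) + v·g(s))²). -/
open RealInnerProductSpace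

/-- Cross product on `EuclideanSpace ℝ (Fin 3)`. -/
noncomputable def cross3 (u v : EuclideanSpace ℝ (Fin 3)) : EuclideanSpace ℝ (Fin 3) :=
  (EuclideanSpace.equiv (Fin 3) ℝ).symm
    (crossProduct ((EuclideanSpace.equiv (Fin 3) ℝ) u) ((EuclideanSpace.equiv (Fin 3) ℝ) v))

/-- Determinant of the 3×3 matrix whose rows are the given vectors. -/
noncomputable def det3 (u v w : EuclideanSpace ℝ (Fin 3)) : ℝ :=
  Matrix.det (Matrix.of ![(EuclideanSpace.equiv (Fin 3) ℝ) u,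
    (EuclideanSpace.equiv (Fin 3) ℝ) v, (EuclideanSpace.equiv (Fin 3) ℝ) w])

/-! The unit vectors `N, C, W` form a right-handed orthonormal frame. In terms of an angle function
`C` and `W` are a rotation of `B` and `T` by a variable angle, so the Frenet equations give
`C' = -f N + g W`, while inverting the rotation gives `T = -cos θ C + sin θ W`. In the frame
`N, C, W` one has `φ_s = -v f N - cos θ C + (sin θ + v g) W` and `φ_v = C`, and the cross product is
read off from `N × C = W` and `W × C = -N`. -/

local notation "E³" => EuclideanSpace ℝ (Fin 3)

section CrossProduct

lemma isBilinearMap_cross3 : IsBilinearMap ℝ cross3 where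
  add_left u v w := by simp [cross3]
  smul_left c u v := by simp [cross3]
  add_right u v w := by simp [cross3]
  smul_right c u v := by simp [cross3]

lemma cross3_self (u : E³) : cross3 u u = 0 := by
  simp [cross3]

lemma neg_cross3 (u v : E³) : -cross3 u v = cross3 v u := by
  ext i
  exact congrFun (cross_anticomm u.ofLp v.ofLp) i

lemma real_inner_eq_dotProduct (u v : E³) : ⟪u, v⟫ = u.ofLp ⬝ᵥ v.ofLp := by
  rw [EuclideanSpace.inner_eq_star_dotProduct, star_trivial, dotProduct_comm]

lemma inner_cross3_left (u v : E³) : ⟪u, cross3 u v⟫ = 0 := by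
  rw [real_inner_eq_dotProduct]
  exact dot_self_cross u.ofLp v.ofLp

lemma inner_cross3_right (u v : E³) : ⟪v, cross3 u v⟫ = 0 := by
  rw [real_inner_eq_dotProduct]
  exact dot_cross_self u.ofLp v.ofLp

lemma inner_cross3_cross3 (u v w x : E³) :
    ⟪cross3 u v, cross3 w x⟫ = ⟪u, w⟫ * ⟪v, x⟫ - ⟪u, x⟫ * ⟪v, w⟫ := by
  simp only [real_inner_eq_dotProduct]
  exact cross_dot_cross u.ofLp v.ofLp w.ofLp x.ofLp

lemma cross3_cross3_eq_smul_sub_smul (u v w : E³) :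
    cross3 (cross3 u v) w = ⟪u, w⟫ • v - ⟪v, w⟫ • u := by
  simp only [real_inner_eq_dotProduct]
  ext i
  exact congrFun (cross_cross_eq_smul_sub_smul u.ofLp v.ofLp w.ofLp) i

lemma hasDerivAt_cross3 {u v : ℝ → E³} {u' v' : E³} {s : ℝ}
    (hu : HasDerivAt u u' s) (hv : HasDerivAt v v' s) :
    HasDerivAt (fun t => cross3 (u t) (v t)) (cross3 (u s) v' + cross3 u' (v s)) s :=
  isBilinearMap_cross3.toContinuousBilinearMap.hasDerivAt_of_bilinear (fun _ => hu) (fun _ => hv)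

end CrossProduct

/-- A right-handed orthonormal frame of Euclidean 3-space; that `e₃` is a unit vector orthogonal to
`e₁` and `e₂` follows from `e₃ = e₁ × e₂`. -/
structure IsRightHandedFrame (e₁ e₂ e₃ : E³) : Prop where
  norm_fst : ‖e₁‖ = 1
  norm_snd : ‖e₂‖ = 1
  inner_fst_snd : ⟪e₁, e₂⟫ = 0
  cross3_fst_snd : cross3 e₁ e₂ = e₃

namespace IsRightHandedFrame

variable {e₁ e₂ e₃ : E³}

lemma inner_fst_thd (h : IsRightHandedFrame e₁ e₂ e₃) : ⟪e₁, e₃⟫ = 0 := by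
  rw [← h.cross3_fst_snd, inner_cross3_left]

lemma inner_snd_thd (h : IsRightHandedFrame e₁ e₂ e₃) : ⟪e₂, e₃⟫ = 0 := by
  rw [← h.cross3_fst_snd, inner_cross3_right]

lemma norm_thd (h : IsRightHandedFrame e₁ e₂ e₃) : ‖e₃‖ = 1 := by
  have hsq : ‖e₃‖ ^ 2 = 1 := by
    rw [← real_inner_self_eq_norm_sq, ← h.cross3_fst_snd, inner_cross3_cross3,
      real_inner_self_eq_norm_sq, real_inner_self_eq_norm_sq, h.norm_fst, h.norm_snd,
      h.inner_fst_snd]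
    norm_num
  exact (pow_eq_one_iff_of_nonneg (norm_nonneg _) two_ne_zero).mp hsq

lemma rotate (h : IsRightHandedFrame e₁ e₂ e₃) : IsRightHandedFrame e₂ e₃ e₁ where
  norm_fst := h.norm_snd
  norm_snd := h.norm_thd
  inner_fst_snd := h.inner_snd_thd
  cross3_fst_snd := by
    rw [← neg_cross3, ← h.cross3_fst_snd, cross3_cross3_eq_smul_sub_smul, h.inner_fst_snd,
      inner_self_eq_one_of_norm_eq_one h.norm_snd, zero_smul, one_smul, zero_sub, neg_neg]

lemma cross3_fst (h : IsRightHandedFrame e₁ e₂ e₃) (x : E³) :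
    cross3 e₁ x = ⟪e₂, x⟫ • e₃ - ⟪e₃, x⟫ • e₂ := by
  rw [← h.rotate.cross3_fst_snd, cross3_cross3_eq_smul_sub_smul]

lemma rotate_about_fst (h : IsRightHandedFrame e₁ e₂ e₃) {a b : ℝ} (hab : a ^ 2 + b ^ 2 = 1) :
    IsRightHandedFrame e₁ (a • e₂ + b • e₃) (-b • e₂ + a • e₃) where
  norm_fst := h.norm_fst
  norm_snd := by
    rw [← pow_eq_one_iff_of_nonneg (norm_nonneg _) two_ne_zero, norm_add_sq_real, norm_smul,
      norm_smul, real_inner_smul_left, real_inner_smul_right, h.norm_snd, h.norm_thd,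
      h.inner_snd_thd]
    simpa using hab
  inner_fst_snd := by
    rw [inner_add_right, real_inner_smul_right, real_inner_smul_right, h.inner_fst_snd,
      h.inner_fst_thd, mul_zero, mul_zero, add_zero]
  cross3_fst_snd := by
    rw [isBilinearMap_cross3.add_right, isBilinearMap_cross3.smul_right,
      isBilinearMap_cross3.smul_right, h.cross3_fst_snd, ← neg_cross3 e₃,
      h.rotate.rotate.cross3_fst_snd]
    module

lemma norm_sq_smul_fst_add_smul_thd (h : IsRightHandedFrame e₁ e₂ e₃) (a b : ℝ) :
    ‖a • e₁ + b • e₃‖ ^ 2 = a ^ 2 + b ^ 2 := by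
  rw [norm_add_sq_real, norm_smul, norm_smul, real_inner_smul_left, real_inner_smul_right,
    h.norm_fst, h.norm_thd, h.inner_fst_thd]
  simp

lemma cross3_combination_snd (h : IsRightHandedFrame e₁ e₂ e₃) (a b c : ℝ) :
    cross3 (a • e₁ + b • e₂ + c • e₃) e₂ = -c • e₁ + a • e₃ := by
  simp only [isBilinearMap_cross3.add_left, isBilinearMap_cross3.smul_left, cross3_self,
    h.cross3_fst_snd, ← neg_cross3 e₂ e₃, h.rotate.cross3_fst_snd]
  module

end IsRightHandedFrame

section FrenetFrame

/-- `T, N, B` is a right-handed orthonormal frame along the curve `α` which at the parameter `s`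
satisfies the Frenet equations with curvature `κ` and torsion `τ`. The equation for `N'` is a
consequence of the other two. The curvature may vanish or be negative. -/
structure IsFrenetFrameAt (α T N B : ℝ → E³) (κ τ s : ℝ) : Prop where
  frame : IsRightHandedFrame (T s) (N s) (B s)
  hasDerivAt_curve : HasDerivAt α (T s) s
  hasDerivAt_tangent : HasDerivAt T (κ • N s) s
  hasDerivAt_binormal : HasDerivAt B (-τ • N s) s

lemma inner_eq_zero_of_norm_const {F : Type*} [NormedAddCommGroup F] [InnerProductSpace ℝ F]
    {u : ℝ → F} {u' : F} {c s : ℝ} (hnorm : ∀ t, ‖u t‖ = c) (hu : HasDerivAt u u' s) :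
    ⟪u s, u'⟫ = 0 := by
  have hderiv := hu.norm_sq
  simp only [hnorm] at hderiv
  linarith [hderiv.unique (hasDerivAt_const s (c ^ 2))]

lemma hasDerivAt_binormal {T N : ℝ → E³} {B N' : E³} {κ s : ℝ}
    (hframe : IsRightHandedFrame (T s) (N s) B) (hT : HasDerivAt T (κ • N s) s)
    (hNnorm : ∀ t, ‖N t‖ = 1) (hN : HasDerivAt N N' s) :
    HasDerivAt (fun t => cross3 (T t) (N t)) (-⟪N', B⟫ • N s) s := by
  refine (hasDerivAt_cross3 hT hN).congr_deriv ?_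
  rw [hframe.cross3_fst, inner_eq_zero_of_norm_const hNnorm hN, real_inner_comm,
    isBilinearMap_cross3.smul_left, cross3_self]
  module

theorem isFrenetFrameAt_of_contDiff {α T N B : ℝ → E³} {κ τ : ℝ → ℝ} (hα : ContDiff ℝ 3 α)
    (hunit : ∀ s, ‖deriv α s‖ = 1) (hT : ∀ s, T s = deriv α s)
    (hκ : ∀ s, κ s = ‖deriv (deriv α) s‖) (hκpos : ∀ s, 0 < κ s)
    (hN : ∀ s, N s = (κ s)⁻¹ • deriv (deriv α) s) (hB : ∀ s, B s = cross3 (T s) (N s))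
    (hτ : ∀ s, τ s = ⟪deriv N s, B s⟫) (s : ℝ) :
    IsFrenetFrameAt α T N B (κ s) (τ s) s := by
  obtain rfl : T = deriv α := funext hT
  have hα' : ContDiff ℝ 2 (deriv α) := hα.deriv'
  have hα'' : Differentiable ℝ (deriv (deriv α)) := hα'.differentiable_deriv_two
  have hκne (t : ℝ) : κ t ≠ 0 := (hκpos t).ne'
  have hcurv (t : ℝ) : deriv (deriv α) t = κ t • N t := by rw [hN, smul_inv_smul₀ (hκne t)]
  have hT' : HasDerivAt (deriv α) (κ s • N s) s :=
    hcurv s ▸ (hα'.differentiable two_ne_zero s).hasDerivAt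
  have hNnorm (t : ℝ) : ‖N t‖ = 1 := by
    rw [hN, norm_smul, norm_inv, Real.norm_of_nonneg (hκpos t).le, ← hκ, inv_mul_cancel₀ (hκne t)]
  have hN' : DifferentiableAt ℝ N s := by
    have hκ' : DifferentiableAt ℝ κ s := by
      rw [funext hκ]
      exact (hα'' s).norm ℝ (norm_ne_zero_iff.mp (hκ s ▸ hκne s))
    rw [funext hN]
    exact (hκ'.inv (hκne s)).smul (hα'' s)
  have horth : ⟪deriv α s, N s⟫ = 0 := by
    simpa [real_inner_smul_right, hκne s] using inner_eq_zero_of_norm_const hunit hT'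
  have hframe : IsRightHandedFrame (deriv α s) (N s) (B s) :=
    ⟨hunit s, hNnorm s, horth, (hB s).symm⟩
  refine ⟨hframe, (hα.differentiable three_ne_zero s).hasDerivAt, hT', ?_⟩
  exact hτ s ▸ (hasDerivAt_binormal hframe hT' hNnorm hN'.hasDerivAt).congr_of_eventuallyEq
    (.of_forall hB)

end FrenetFrame

section AlternativeFrame

/-- The vector `C` of the alternative frame, written with an angle function instead of the
curvatures so that it makes sense without dividing by `√(κ² + τ²)`. -/
noncomputable def alternativeC (T B : ℝ → E³) (θ : ℝ → ℝ) (s : ℝ) : E³ :=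
  -Real.cos (θ s) • T s + Real.sin (θ s) • B s

/-- The vector `W` of the alternative frame, written with an angle function as for
`alternativeC`. -/
noncomputable def alternativeW (T B : ℝ → E³) (θ : ℝ → ℝ) (s : ℝ) : E³ :=
  Real.sin (θ s) • T s + Real.cos (θ s) • B s

lemma inv_smul_mul_smul_add_mul_smul {K M : Type*} [DivisionRing K] [AddCommGroup M] [Module K M]
    {r : K} (hr : r ≠ 0) (a b : K) (x y : M) :
    r⁻¹ • ((r * a) • x + (r * b) • y) = a • x + b • y := by
  rw [mul_smul, mul_smul, ← smul_add, inv_smul_smul₀ hr]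

lemma IsRightHandedFrame.alternative {T N B : ℝ → E³} {s : ℝ}
    (h : IsRightHandedFrame (T s) (N s) (B s)) (θ : ℝ → ℝ) :
    IsRightHandedFrame (N s) (alternativeC T B θ s) (alternativeW T B θ s) := by
  have hangle : Real.sin (θ s) ^ 2 + (-Real.cos (θ s)) ^ 2 = 1 := by
    rw [neg_sq, Real.sin_sq_add_cos_sq]
  have hrot := h.rotate.rotate_about_fst hangle
  rwa [neg_neg, add_comm, add_comm (_ • B s)] at hrot

lemma tangent_eq_alternative (T B : ℝ → E³) (θ : ℝ → ℝ) (s : ℝ) :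
    T s = -Real.cos (θ s) • alternativeC T B θ s + Real.sin (θ s) • alternativeW T B θ s := by
  rw [alternativeC, alternativeW]
  match_scalars
  · linear_combination -Real.sin_sq_add_cos_sq (θ s)
  · ring

lemma IsFrenetFrameAt.hasDerivAt_alternativeC {α T N B : ℝ → E³} {θ : ℝ → ℝ} {f g s : ℝ}
    (h : IsFrenetFrameAt α T N B (f * Real.cos (θ s)) (f * Real.sin (θ s)) s)
    (hθ : HasDerivAt θ g s) :
    HasDerivAt (alternativeC T B θ) (-f • N s + g • alternativeW T B θ s) s := by
  refine ((hθ.cos.neg.smul h.hasDerivAt_tangent).add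
    (hθ.sin.smul h.hasDerivAt_binormal)).congr_deriv ?_
  rw [alternativeW, Pi.neg_apply]
  match_scalars
  · linear_combination -f * Real.sin_sq_add_cos_sq (θ s)
  · ring
  · ring

end AlternativeFrame

section RuledSurface

lemma deriv_const_add_smul_const {F : Type*} [NormedAddCommGroup F] [NormedSpace ℝ F]
    (a c : F) (v : ℝ) :
    deriv (fun w : ℝ => a + w • c) v = c := by
  simpa using (((hasDerivAt_id v).smul_const c).const_add a).deriv

lemma IsFrenetFrameAt.deriv_cRuledSurface {α T N B : ℝ → E³} {θ : ℝ → ℝ} {f g s : ℝ}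
    (h : IsFrenetFrameAt α T N B (f * Real.cos (θ s)) (f * Real.sin (θ s)) s)
    (hθ : HasDerivAt θ g s) (v : ℝ) :
    deriv (fun u => α u + v • alternativeC T B θ u) s =
      (-(v * f)) • N s + (-Real.cos (θ s)) • alternativeC T B θ s +
        (Real.sin (θ s) + v * g) • alternativeW T B θ s := by
  have hφ : HasDerivAt (fun u => α u + v • alternativeC T B θ u)
      (T s + v • (-f • N s + g • alternativeW T B θ s)) s :=
    h.hasDerivAt_curve.add ((h.hasDerivAt_alternativeC hθ).const_smul v)
  rw [hφ.deriv]
  nth_rw 1 [tangent_eq_alternative T B θ s]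
  module

theorem stmt_11_general {α T N B : ℝ → E³} {θ : ℝ → ℝ} {f g s : ℝ}
    (h : IsFrenetFrameAt α T N B (f * Real.cos (θ s)) (f * Real.sin (θ s)) s)
    (hθ : HasDerivAt θ g s) {v : ℝ} {φs φv : E³}
    (hφs : φs = deriv (fun u => α u + v • alternativeC T B θ u) s)
    (hφv : φv = deriv (fun w => α s + w • alternativeC T B θ s) v) :
    cross3 φs φv = (-(Real.sin (θ s) + v * g)) • N s + (-(v * f)) • alternativeW T B θ s ∧
    ‖cross3 φs φv‖ ^ 2 = v ^ 2 * f ^ 2 + (Real.sin (θ s) + v * g) ^ 2 ∧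
    (v ^ 2 * f ^ 2 + (Real.sin (θ s) + v * g) ^ 2 ≠ 0 →
      ‖cross3 φs φv‖⁻¹ • cross3 φs φv =
        (Real.sqrt (v ^ 2 * f ^ 2 + (Real.sin (θ s) + v * g) ^ 2))⁻¹ •
          ((-(Real.sin (θ s) + v * g)) • N s + (-(v * f)) • alternativeW T B θ s)) := by
  have hframe := h.frame.alternative θ
  have hcross : cross3 φs φv =
      (-(Real.sin (θ s) + v * g)) • N s + (-(v * f)) • alternativeW T B θ s := by
    rw [hφs, hφv, h.deriv_cRuledSurface hθ, deriv_const_add_smul_const,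
      hframe.cross3_combination_snd]
  have hnorm : ‖cross3 φs φv‖ ^ 2 = v ^ 2 * f ^ 2 + (Real.sin (θ s) + v * g) ^ 2 := by
    rw [hcross, hframe.norm_sq_smul_fst_add_smul_thd]
    ring
  refine ⟨hcross, hnorm, fun _ => ?_⟩
  rw [← hnorm, Real.sqrt_sq (norm_nonneg _), ← hcross]

end RuledSurface

theorem stmt_11
    (α : ℝ → EuclideanSpace ℝ (Fin 3))
    (hα : ContDiff ℝ (⊤ : ℕ∞) α)
    (hunit : ∀ s, ‖deriv α s‖ = 1)
    (T : ℝ → EuclideanSpace ℝ (Fin 3)) (hT : ∀ s, T s = deriv α s)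
    (κ : ℝ → ℝ) (hκ : ∀ s, κ s = ‖deriv (deriv α) s‖) (hκpos : ∀ s, 0 < κ s)
    (N : ℝ → EuclideanSpace ℝ (Fin 3)) (hN : ∀ s, N s = (κ s)⁻¹ • deriv (deriv α) s)
    (B : ℝ → EuclideanSpace ℝ (Fin 3)) (hB : ∀ s, B s = cross3 (T s) (N s))
    (τ : ℝ → ℝ) (hτ : ∀ s, τ s = ⟪deriv N s, B s⟫)
    (f : ℝ → ℝ) (hf : ∀ s, f s = Real.sqrt (κ s ^ 2 + τ s ^ 2))
    (g : ℝ → ℝ) (hg : ∀ s, g s = κ s ^ 2 / (κ s ^ 2 + τ s ^ 2) * deriv (fun u => τ u / κ u) s)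
    (C : ℝ → EuclideanSpace ℝ (Fin 3))
    (hC : ∀ s, C s = (Real.sqrt (κ s ^ 2 + τ s ^ 2))⁻¹ • ((-κ s) • T s + τ s • B s))
    (W : ℝ → EuclideanSpace ℝ (Fin 3))
    (hW : ∀ s, W s = (Real.sqrt (κ s ^ 2 + τ s ^ 2))⁻¹ • (τ s • T s + κ s • B s))
    (θ : ℝ → ℝ) (hθdiff : Differentiable ℝ θ)
    (hθderiv : ∀ s, deriv θ s = g s)
    (hθκ : ∀ s, κ s = f s * Real.cos (θ s))
    (hθτ : ∀ s, τ s = f s * Real.sin (θ s))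
    (φs φv : ℝ → ℝ → EuclideanSpace ℝ (Fin 3))
    (hφs : ∀ s v, φs s v = deriv (fun u => α u + v • C u) s)
    (hφv : ∀ s v, φv s v = deriv (fun w => α s + w • C s) v) :
    ∀ (s v : ℝ),
      cross3 (φs s v) (φv s v) = (-(Real.sin (θ s) + v * g s)) • N s + (-(v * f s)) • W s ∧
      ‖cross3 (φs s v) (φv s v)‖ ^ 2 = v ^ 2 * f s ^ 2 + (Real.sin (θ s) + v * g s) ^ 2 ∧
      (v ^ 2 * f s ^ 2 + (Real.sin (θ s) + v * g s) ^ 2 ≠ 0 →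
        (‖cross3 (φs s v) (φv s v)‖)⁻¹ • cross3 (φs s v) (φv s v) =
          (Real.sqrt (v ^ 2 * f s ^ 2 + (Real.sin (θ s) + v * g s) ^ 2))⁻¹ •
            ((-(Real.sin (θ s) + v * g s)) • N s + (-(v * f s)) • W s)) := by
  have hfne (s : ℝ) : f s ≠ 0 := left_ne_zero_of_mul (hθκ s ▸ (hκpos s).ne')
  obtain rfl : C = alternativeC T B θ := by
    funext s
    rw [hC, ← hf, hθκ, hθτ, ← mul_neg, inv_smul_mul_smul_add_mul_smul (hfne s), alternativeC]
  obtain rfl : W = alternativeW T B θ := by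
    funext s
    rw [hW, ← hf, hθκ, hθτ, inv_smul_mul_smul_add_mul_smul (hfne s), alternativeW]
  intro s v
  have hfrenet : IsFrenetFrameAt α T N B (f s * Real.cos (θ s)) (f s * Real.sin (θ s)) s :=
    hθκ s ▸ hθτ s ▸ isFrenetFrameAt_of_contDiff (contDiff_infty.mp hα 3) hunit hT hκ hκpos
      hN hB hτ s
  exact stmt_11_general hfrenet (hθderiv s ▸ (hθdiff s).hasDerivAt) (hφs s v) (hφv s v)
end

section
/- If θ is an angle function for α, then at every point (s, v) with D := v²f(s)² + (sin θ(s) + v·g(s))² ≠ 0, the mean curvature of the C-ruled surface, H = (E·N − 2F·M + G·L)/(2(EG − F²)), equals H = (v²(f′(s)g(s) − f(s)g′(s)) + v·f′(s)·sin θ(s) + f(s)·sin θ(s)·cos θ(s) − v·f(s)·g(s)·cos θ(s))/(2·D^{3/2}). -/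
open RealInnerProductSpace

/-!
The pair (Frenet frame `T, N, B`; curvatures `κ, τ`) and the pair (alternative frame `N, C, W`;
curvatures `f, g`) satisfy the same Frenet equations: rotating `T, B` by the angle `θ` turns the
first into the second. In the frame `N, C, W` the ruling direction of the `C`-ruled surface is a
frame vector and `T = -cos θ • C + sin θ • W`, so with `a = -v f` and `b = sin θ + v g` one gets
`φ_s = a • N - cos θ • C + b • W`, `φ_v = C`, `F = -cos θ`, `G = 1`, `EG - F² = a² + b²`, and the
remaining determinants are `2 × 2` minors in the coordinates along `N` and `W`.
-/

namespace SpaceCurve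

open scoped Matrix

local notation "E³" => EuclideanSpace ℝ (Fin 3)

section CrossProduct

theorem inner_left_cross3 (u v : E³) : ⟪u, cross3 u v⟫ = 0 :=
  (dotProduct_comm _ _).trans (dot_self_cross u.ofLp v.ofLp)

theorem inner_right_cross3 (u v : E³) : ⟪v, cross3 u v⟫ = 0 :=
  (dotProduct_comm _ _).trans (dot_cross_self u.ofLp v.ofLp)

theorem cross3_self (u : E³) : cross3 u u = 0 :=
  congrArg (WithLp.toLp 2) (cross_self u.ofLp)

theorem cross3_cross3_right (u v w : E³) :
    cross3 u (cross3 v w) = ⟪u, w⟫ • v - ⟪u, v⟫ • w := by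
  rw [real_inner_comm]
  exact congrArg (WithLp.toLp 2) (cross_cross_eq_smul_sub_smul' u.ofLp v.ofLp w.ofLp)

theorem norm_cross3_of_inner_eq_zero {u v : E³} (huv : ⟪u, v⟫ = 0) :
    ‖cross3 u v‖ = ‖u‖ * ‖v‖ := by
  refine (InnerProductGeometry.norm_ofLp_crossProduct u v).trans ?_
  rw [(InnerProductGeometry.inner_eq_zero_iff_angle_eq_pi_div_two u v).1 huv,
    Real.sin_pi_div_two, mul_one]

theorem det3_eq_inner_cross3 (u v w : E³) : det3 u v w = ⟪cross3 u v, w⟫ :=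
  (triple_product_eq_det u.ofLp v.ofLp w.ofLp).symm.trans <|
    (triple_product_permutation _ _ _).trans (triple_product_permutation _ _ _)

theorem det3_linear_combination (u v w : E³) (a₁ a₂ a₃ b₁ b₂ b₃ c₁ c₂ c₃ : ℝ) :
    det3 (a₁ • u + a₂ • v + a₃ • w) (b₁ • u + b₂ • v + b₃ • w) (c₁ • u + c₂ • v + c₃ • w) =
      !![a₁, a₂, a₃; b₁, b₂, b₃; c₁, c₂, c₃].det * det3 u v w := by
  simp only [det3, Matrix.det_fin_three, Matrix.of_apply, Matrix.cons_val, map_add, map_smul,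
    Pi.add_apply, Pi.smul_apply, smul_eq_mul]
  ring

theorem isBilinearMap_cross3 : IsBilinearMap ℝ cross3 where
  add_left u u' v := by simp [cross3]
  smul_left c u v := by simp [cross3]
  add_right u v v' := by simp [cross3]
  smul_right c u v := by simp [cross3]

theorem hasDerivAt_cross3 {u v : ℝ → E³} {u' v' : E³} {s : ℝ} (hu : HasDerivAt u u' s)
    (hv : HasDerivAt v v' s) :
    HasDerivAt (fun t => cross3 (u t) (v t)) (cross3 (u s) v' + cross3 u' (v s)) s :=
  isBilinearMap_cross3.toContinuousBilinearMap.hasDerivAt_of_bilinear (fun _ => hu) fun _ => hv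

theorem contDiff_cross3 {n : WithTop ℕ∞} {u v : ℝ → E³} (hu : ContDiff ℝ n u)
    (hv : ContDiff ℝ n v) : ContDiff ℝ n fun s => cross3 (u s) (v s) :=
  (isBilinearMap_cross3.toContinuousBilinearMap.contDiff.comp hu).clm_apply hv

end CrossProduct

section InnerDerivative

variable {E : Type*} [NormedAddCommGroup E] [InnerProductSpace ℝ E] {x y : ℝ → E} {x' y' : E}
  {s c : ℝ}

theorem inner_right_eq_neg_inner_left_of_hasDerivAt (hx : HasDerivAt x x' s)
    (hy : HasDerivAt y y' s) (hxy : ∀ t, ⟪x t, y t⟫ = c) : ⟪x s, y'⟫ = -⟪x', y s⟫ := by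
  have h := hx.inner ℝ hy
  rw [funext hxy] at h
  exact eq_neg_of_add_eq_zero_left (h.unique (hasDerivAt_const s c))

theorem inner_eq_zero_of_hasDerivAt_of_norm_eq (hx : HasDerivAt x x' s) (hc : ∀ t, ‖x t‖ = c) :
    ⟪x s, x'⟫ = 0 := by
  have h := inner_right_eq_neg_inner_left_of_hasDerivAt hx hx fun t => by
    rw [real_inner_self_eq_norm_sq, hc]
  rw [real_inner_comm] at h
  linarith [real_inner_comm (x s) x']

end InnerDerivative

/-- A positively oriented orthonormal basis of Euclidean three-space. -/
structure IsPositiveFrame (u v w : E³) : Prop where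
  orthonormal : Orthonormal ℝ ![u, v, w]
  det3_eq_one : det3 u v w = 1

namespace IsPositiveFrame

variable {u v w : E³}

theorem of_cross3 (hu : ‖u‖ = 1) (hv : ‖v‖ = 1) (huv : ⟪u, v⟫ = 0) :
    IsPositiveFrame u v (cross3 u v) := by
  have hw : ‖cross3 u v‖ = 1 := by
    rw [norm_cross3_of_inner_eq_zero huv, hu, hv, one_mul]
  constructor
  · simp [orthonormal_vecCons_iff, Fin.forall_fin_succ, hu, hv, huv, hw, inner_left_cross3,
      inner_right_cross3]
  · rw [det3_eq_inner_cross3, real_inner_self_eq_norm_sq, hw, one_pow]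

theorem inner_linear_combination (h : IsPositiveFrame u v w) (a₁ a₂ a₃ b₁ b₂ b₃ : ℝ) :
    ⟪a₁ • u + a₂ • v + a₃ • w, b₁ • u + b₂ • v + b₃ • w⟫ = a₁ * b₁ + a₂ * b₂ + a₃ * b₃ := by
  simpa [Fin.sum_univ_three] using
    h.orthonormal.inner_sum ![a₁, a₂, a₃] ![b₁, b₂, b₃] Finset.univ

theorem det3_linear_combination (h : IsPositiveFrame u v w) (a₁ a₂ a₃ b₁ b₂ b₃ c₁ c₂ c₃ : ℝ) :
    det3 (a₁ • u + a₂ • v + a₃ • w) (b₁ • u + b₂ • v + b₃ • w) (c₁ • u + c₂ • v + c₃ • w) =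
      !![a₁, a₂, a₃; b₁, b₂, b₃; c₁, c₂, c₃].det := by
  rw [SpaceCurve.det3_linear_combination, h.det3_eq_one, mul_one]

theorem inner_linear_combination_snd (h : IsPositiveFrame u v w) (a b c : ℝ) :
    ⟪a • u + b • v + c • w, v⟫ = b := by
  simpa using h.inner_linear_combination a b c 0 1 0

theorem norm_sq_linear_combination (h : IsPositiveFrame u v w) (a b c : ℝ) :
    ‖a • u + b • v + c • w‖ ^ 2 = a ^ 2 + b ^ 2 + c ^ 2 := by
  rw [← real_inner_self_eq_norm_sq, h.inner_linear_combination, sq, sq, sq]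

theorem det3_linear_combination_snd (h : IsPositiveFrame u v w) (a b c a' b' c' : ℝ) :
    det3 (a • u + b • v + c • w) v (a' • u + b' • v + c' • w) = a * c' - c * a' := by
  have hdet := h.det3_linear_combination a b c 0 1 0 a' b' c'
  rw [zero_smul, zero_smul, one_smul, zero_add, add_zero] at hdet
  rw [hdet, Matrix.det_fin_three]
  simp only [Matrix.of_apply, Matrix.cons_val]
  ring

theorem sum_inner_smul (h : IsPositiveFrame u v w) (x : E³) :
    ⟪u, x⟫ • u + ⟪v, x⟫ • v + ⟪w, x⟫ • w = x := by
  let b := (basisOfOrthonormalOfCardEqFinrank h.orthonormal (by simp)).toOrthonormalBasis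
    (by simpa using h.orthonormal)
  simpa [b, Fin.sum_univ_three] using b.sum_repr' x

theorem rotate (h : IsPositiveFrame u v w) (θ : ℝ) :
    IsPositiveFrame v (-Real.cos θ • u + Real.sin θ • w) (Real.sin θ • u + Real.cos θ • w) := by
  constructor
  · have inner_plane (a b a' b' : ℝ) : ⟪a • u + b • w, a' • u + b' • w⟫ = a * a' + b * b' := by
      simpa using h.inner_linear_combination a 0 b a' 0 b'
    have inner_axis (a b : ℝ) : ⟪v, a • u + b • w⟫ = 0 := by
      simpa using h.inner_linear_combination 0 1 0 a 0 b
    have norm_plane {a b : ℝ} (hab : a ^ 2 + b ^ 2 = 1) : ‖a • u + b • w‖ = 1 := by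
      rw [norm_eq_sqrt_real_inner, inner_plane, ← sq, ← sq, hab, Real.sqrt_one]
    rw [orthonormal_vecCons_iff, orthonormal_vecCons_iff, orthonormal_vecCons_iff]
    refine ⟨h.orthonormal.1 1, ?_, norm_plane ?_, ?_, norm_plane ?_, ?_, ?_⟩
    · exact Fin.forall_fin_two.2 ⟨inner_axis _ _, inner_axis _ _⟩
    · rw [neg_sq, Real.cos_sq_add_sin_sq]
    · exact Fin.forall_fin_one.2 ((inner_plane _ _ _ _).trans (by ring))
    · exact Real.sin_sq_add_cos_sq θ
    · exact fun i => i.elim0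
    · exact .of_isEmpty _
  · have hv : v = (0 : ℝ) • u + (1 : ℝ) • v + (0 : ℝ) • w := by module
    have hn : -Real.cos θ • u + Real.sin θ • w =
        -Real.cos θ • u + (0 : ℝ) • v + Real.sin θ • w := by module
    have hb : Real.sin θ • u + Real.cos θ • w =
        Real.sin θ • u + (0 : ℝ) • v + Real.cos θ • w := by module
    rw [hn, hb]
    nth_rewrite 1 [hv]
    rw [h.det3_linear_combination, Matrix.det_fin_three]
    simp only [Matrix.of_apply, Matrix.cons_val]
    linear_combination Real.sin_sq_add_cos_sq θ

end IsPositiveFrame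

/-- A moving frame obeying the Frenet equations with curvature functions `k` and `t`. Both the
Frenet frame (with curvature and torsion) and the alternative frame (with the alternative
curvatures) are instances. -/
structure IsFrenetFrame (e₁ e₂ e₃ : ℝ → E³) (k t : ℝ → ℝ) : Prop where
  isPositiveFrame : ∀ s, IsPositiveFrame (e₁ s) (e₂ s) (e₃ s)
  hasDerivAt_fst : ∀ s, HasDerivAt e₁ (k s • e₂ s) s
  hasDerivAt_snd : ∀ s, HasDerivAt e₂ (-k s • e₁ s + t s • e₃ s) s
  hasDerivAt_thd : ∀ s, HasDerivAt e₃ (-t s • e₂ s) s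

theorem isFrenetFrame_cross3 {T N : ℝ → E³} {κ : ℝ → ℝ} (hT : ∀ s, ‖T s‖ = 1)
    (hN : ∀ s, ‖N s‖ = 1) (hTN : ∀ s, ⟪T s, N s⟫ = 0) (hT' : ∀ s, HasDerivAt T (κ s • N s) s)
    (hN' : Differentiable ℝ N) :
    IsFrenetFrame T N (fun s => cross3 (T s) (N s)) κ
      fun s => ⟪deriv N s, cross3 (T s) (N s)⟫ := by
  have hframe s := IsPositiveFrame.of_cross3 (hT s) (hN s) (hTN s)
  have hN'_eq s : HasDerivAt N
      (-κ s • T s + ⟪deriv N s, cross3 (T s) (N s)⟫ • cross3 (T s) (N s)) s := by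
    have hd := (hN' s).hasDerivAt
    have hTd : ⟪T s, deriv N s⟫ = -κ s := by
      rw [inner_right_eq_neg_inner_left_of_hasDerivAt (hT' s) hd hTN, real_inner_smul_left,
        real_inner_self_eq_norm_sq, hN, one_pow, mul_one]
    have hNd : ⟪N s, deriv N s⟫ = 0 := inner_eq_zero_of_hasDerivAt_of_norm_eq hd hN
    have hsum := (hframe s).sum_inner_smul (deriv N s)
    rw [hTd, hNd, zero_smul, add_zero, real_inner_comm] at hsum
    exact hd.congr_deriv hsum.symm
  refine ⟨hframe, hT', hN'_eq, fun s => (hasDerivAt_cross3 (hT' s) (hN'_eq s)).congr_deriv ?_⟩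
  rw [isBilinearMap_cross3.add_right, isBilinearMap_cross3.smul_right,
    isBilinearMap_cross3.smul_right, isBilinearMap_cross3.smul_left, cross3_self, cross3_self,
    cross3_cross3_right, hTN, real_inner_self_eq_norm_sq, hT]
  module

theorem IsFrenetFrame.hasDerivAt_linear_combination {e₁ e₂ e₃ : ℝ → E³} {k t p q r : ℝ → ℝ}
    {s p' q' r' : ℝ} (h : IsFrenetFrame e₁ e₂ e₃ k t) (hp : HasDerivAt p p' s)
    (hq : HasDerivAt q q' s) (hr : HasDerivAt r r' s) :
    HasDerivAt (fun s => p s • e₁ s + q s • e₂ s + r s • e₃ s)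
      ((p' - q s * k s) • e₁ s + (q' + p s * k s - r s * t s) • e₂ s + (r' + q s * t s) • e₃ s)
      s := by
  refine (((hp.smul (h.hasDerivAt_fst s)).add (hq.smul (h.hasDerivAt_snd s))).add
    (hr.smul (h.hasDerivAt_thd s))).congr_deriv ?_
  module

theorem IsFrenetFrame.rotate {T N B : ℝ → E³} {κ τ f g θ : ℝ → ℝ} (h : IsFrenetFrame T N B κ τ)
    (hθ : ∀ s, HasDerivAt θ (g s) s) (hκ : ∀ s, κ s = f s * Real.cos (θ s))
    (hτ : ∀ s, τ s = f s * Real.sin (θ s)) :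
    IsFrenetFrame N (fun s => -Real.cos (θ s) • T s + Real.sin (θ s) • B s)
      (fun s => Real.sin (θ s) • T s + Real.cos (θ s) • B s) f g where
  isPositiveFrame s := (h.isPositiveFrame s).rotate (θ s)
  hasDerivAt_fst s := (h.hasDerivAt_snd s).congr_deriv (by rw [hκ, hτ]; module)
  hasDerivAt_snd s := by
    refine (((hθ s).cos.neg.smul (h.hasDerivAt_fst s)).add
      ((hθ s).sin.smul (h.hasDerivAt_thd s))).congr_deriv ?_
    simp only [Pi.neg_apply, hκ, hτ]
    linear_combination (norm := module) (-f s * Real.sin_sq_add_cos_sq (θ s)) • N s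
  hasDerivAt_thd s := by
    refine (((hθ s).sin.smul (h.hasDerivAt_fst s)).add
      ((hθ s).cos.smul (h.hasDerivAt_thd s))).congr_deriv ?_
    rw [hκ, hτ]
    module

section MeanCurvature

/-- The mean curvature `(EN - 2FM + GL) / (2(EG - F²))` of the parametrized surface `φ` at the
parameter `(s, v)`. It is meaningful at regular parameters only: elsewhere the division by `0`
gives `0`. -/
noncomputable def meanCurvature (φ : ℝ → ℝ → E³) (s v : ℝ) : ℝ :=
  let φs s v := deriv (fun u => φ u v) s
  let φv s v := deriv (fun w => φ s w) v
  let E := ‖φs s v‖ ^ 2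
  let F := ⟪φs s v, φv s v⟫
  let G := ‖φv s v‖ ^ 2
  let normal x := det3 (φs s v) (φv s v) x / √(E * G - F ^ 2)
  let L := normal (deriv (fun u => φs u v) s)
  let M := normal (deriv (fun u => φv u v) s)
  let N := normal (deriv (fun w => φv s w) v)
  (E * N - 2 * F * M + G * L) / (2 * (E * G - F ^ 2))

theorem meanCurvature_ruled {α C α' C' : ℝ → E³} {α'' C'' : E³} {s v D : ℝ}
    (hα : ∀ t, HasDerivAt α (α' t) t) (hα' : HasDerivAt α' α'' s)
    (hC : ∀ t, HasDerivAt C (C' t) t) (hC' : HasDerivAt C' C'' s) (hunit : ‖C s‖ = 1)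
    (hD : ‖α' s + v • C' s‖ ^ 2 - ⟪α' s + v • C' s, C s⟫ ^ 2 = D) (hD_pos : 0 < D) :
    meanCurvature (fun s v => α s + v • C s) s v =
      (det3 (α' s + v • C' s) (C s) (α'' + v • C'') -
          2 * ⟪α' s + v • C' s, C s⟫ * det3 (α' s + v • C' s) (C s) (C' s)) /
        (2 * √D ^ 3) := by
  have hφs (t w : ℝ) : deriv (fun u => α u + w • C u) t = α' t + w • C' t :=
    ((hα t).fun_add ((hC t).fun_const_smul w)).deriv
  have hφv (t w : ℝ) : deriv (fun w => α t + w • C t) w = C t :=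
    (((hasDerivAt_id w).smul_const (C t)).const_add (α t)).deriv.trans (one_smul ℝ _)
  have hφss : deriv (fun u => α' u + v • C' u) s = α'' + v • C'' :=
    (hα'.fun_add (hC'.fun_const_smul v)).deriv
  have hdet_zero : det3 (α' s + v • C' s) (C s) 0 = 0 := by
    rw [det3_eq_inner_cross3, inner_zero_right]
  simp only [meanCurvature, hφs, hφv, hφss, (hC s).deriv, deriv_const, hdet_zero, hunit, one_pow,
    mul_one, hD, zero_div, mul_zero, zero_sub, one_mul]
  have hsqrt : √D ≠ 0 := (Real.sqrt_pos.2 hD_pos).ne'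
  rw [← Real.sq_sqrt hD_pos.le, Real.sqrt_sq (Real.sqrt_nonneg D)]
  field_simp
  ring

theorem IsFrenetFrame.meanCurvature_ruled {e₁ e₂ e₃ α : ℝ → E³} {k t p q r : ℝ → ℝ}
    {s v k' t' p' q' r' : ℝ} (h : IsFrenetFrame e₁ e₂ e₃ k t)
    (hα : ∀ s, HasDerivAt α (p s • e₁ s + q s • e₂ s + r s • e₃ s) s)
    (hk : HasDerivAt k k' s) (ht : HasDerivAt t t' s)
    (hp : HasDerivAt p p' s) (hq : HasDerivAt q q' s) (hr : HasDerivAt r r' s)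
    (hreg : (p s - v * k s) ^ 2 + (r s + v * t s) ^ 2 ≠ 0) :
    meanCurvature (fun s v => α s + v • e₂ s) s v =
      ((p s - v * k s) * (r' + v * t') - (r s + v * t s) * (p' - v * k') -
          q s * (p s * t s + r s * k s)) /
        (2 * √((p s - v * k s) ^ 2 + (r s + v * t s) ^ 2) ^ 3) := by
  have hframe := h.isPositiveFrame s
  have hα'' := h.hasDerivAt_linear_combination hp hq hr
  have he₂' s : HasDerivAt e₂ (-k s • e₁ s + (0 : ℝ) • e₂ s + t s • e₃ s) s :=
    (h.hasDerivAt_snd s).congr_deriv (by module)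
  have he₂'' := h.hasDerivAt_linear_combination hk.neg (hasDerivAt_const s 0) ht
  have hφs : p s • e₁ s + q s • e₂ s + r s • e₃ s +
        v • (-k s • e₁ s + (0 : ℝ) • e₂ s + t s • e₃ s) =
      (p s - v * k s) • e₁ s + q s • e₂ s + (r s + v * t s) • e₃ s := by module
  have hφss : (p' - q s * k s) • e₁ s + (q' + p s * k s - r s * t s) • e₂ s +
        (r' + q s * t s) • e₃ s +
        v • ((-k' - 0 * k s) • e₁ s + (0 + -k s * k s - t s * t s) • e₂ s +
          (t' + 0 * t s) • e₃ s) =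
      (p' - q s * k s - v * k') • e₁ s +
        (q' + p s * k s - r s * t s - v * (k s ^ 2 + t s ^ 2)) • e₂ s +
        (r' + q s * t s + v * t') • e₃ s := by module
  have hEG_sub : (p s - v * k s) ^ 2 + q s ^ 2 + (r s + v * t s) ^ 2 - q s ^ 2 =
      (p s - v * k s) ^ 2 + (r s + v * t s) ^ 2 := by ring
  rw [SpaceCurve.meanCurvature_ruled hα hα'' he₂' he₂'' (hframe.orthonormal.1 1)
    (by rw [hφs, hframe.norm_sq_linear_combination, hframe.inner_linear_combination_snd, hEG_sub])
    (by positivity)]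
  congr 1
  simp only [Pi.neg_apply]
  rw [hφss, hφs, hframe.inner_linear_combination_snd, hframe.det3_linear_combination_snd,
    hframe.det3_linear_combination_snd]
  ring

end MeanCurvature

section Curve

/-- The curvature `κ` of a unit-speed curve. -/
noncomputable def curvature (α : ℝ → E³) (s : ℝ) : ℝ := ‖deriv (deriv α) s‖

/-- The principal normal `N` of a unit-speed curve; it is `0` where the curvature vanishes. -/
noncomputable def principalNormal (α : ℝ → E³) (s : ℝ) : E³ :=
  (curvature α s)⁻¹ • deriv (deriv α) s

/-- The binormal `B = T × N` of a unit-speed curve. -/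
noncomputable def binormal (α : ℝ → E³) (s : ℝ) : E³ :=
  cross3 (deriv α s) (principalNormal α s)

/-- The torsion `τ` of a unit-speed curve. -/
noncomputable def torsion (α : ℝ → E³) (s : ℝ) : ℝ :=
  ⟪deriv (principalNormal α) s, binormal α s⟫

/-- The first alternative curvature `f` of a unit-speed curve. -/
noncomputable def altCurvature (α : ℝ → E³) (s : ℝ) : ℝ :=
  √(curvature α s ^ 2 + torsion α s ^ 2)

/-- The second alternative curvature `g` of a unit-speed curve. -/
noncomputable def altTorsion (α : ℝ → E³) (s : ℝ) : ℝ :=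
  curvature α s ^ 2 / (curvature α s ^ 2 + torsion α s ^ 2) *
    deriv (fun u => torsion α u / curvature α u) s

/-- The second vector `C` of the alternative frame of a unit-speed curve. -/
noncomputable def altNormal (α : ℝ → E³) (s : ℝ) : E³ :=
  (√(curvature α s ^ 2 + torsion α s ^ 2))⁻¹ •
    (-curvature α s • deriv α s + torsion α s • binormal α s)

/-- An angle function of a unit-speed curve: a primitive of the second alternative curvature that
is a polar angle of the point `(κ, τ)`. -/
structure IsAngleFunction (α : ℝ → E³) (θ : ℝ → ℝ) : Prop where
  hasDerivAt : ∀ s, HasDerivAt θ (altTorsion α s) s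
  curvature_eq : ∀ s, curvature α s = altCurvature α s * Real.cos (θ s)
  torsion_eq : ∀ s, torsion α s = altCurvature α s * Real.sin (θ s)

variable {α : ℝ → E³} {θ : ℝ → ℝ} {n : WithTop ℕ∞}

theorem contDiff_deriv_deriv (hα : ContDiff ℝ (n + 2) α) : ContDiff ℝ n (deriv (deriv α)) := by
  have hα' : ContDiff ℝ (n + 1 + 1) α := by rwa [add_assoc, one_add_one_eq_two]
  exact hα'.deriv'.deriv'

theorem contDiff_curvature (hα : ContDiff ℝ (n + 2) α) (hκ : ∀ s, curvature α s ≠ 0) :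
    ContDiff ℝ n (curvature α) :=
  (contDiff_deriv_deriv hα).norm ℝ fun s => norm_ne_zero_iff.1 (hκ s)

theorem contDiff_principalNormal (hα : ContDiff ℝ (n + 2) α) (hκ : ∀ s, curvature α s ≠ 0) :
    ContDiff ℝ n (principalNormal α) :=
  ((contDiff_curvature hα hκ).inv hκ).smul (contDiff_deriv_deriv hα)

theorem contDiff_binormal (hα : ContDiff ℝ (n + 2) α) (hκ : ∀ s, curvature α s ≠ 0) :
    ContDiff ℝ n (binormal α) := by
  refine contDiff_cross3 ?_ (contDiff_principalNormal hα hκ)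
  have hα' : ContDiff ℝ (n + 1 + 1) α := by rwa [add_assoc, one_add_one_eq_two]
  exact hα'.deriv'.of_le le_self_add

theorem contDiff_torsion (hα : ContDiff ℝ (n + 3) α) (hκ : ∀ s, curvature α s ≠ 0) :
    ContDiff ℝ n (torsion α) := by
  have hα' : ContDiff ℝ (n + 1 + 2) α := by rwa [add_assoc, add_comm 1, two_add_one_eq_three]
  exact (contDiff_principalNormal hα' hκ).deriv'.inner ℝ
    ((contDiff_binormal hα' hκ).of_le le_self_add)

theorem curvature_sq_add_torsion_sq_pos {s : ℝ} (hκ : curvature α s ≠ 0) :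
    0 < curvature α s ^ 2 + torsion α s ^ 2 := by
  positivity

theorem contDiff_curvature_sq_add_torsion_sq (hα : ContDiff ℝ (n + 3) α)
    (hκ : ∀ s, curvature α s ≠ 0) :
    ContDiff ℝ n fun s => curvature α s ^ 2 + torsion α s ^ 2 := by
  have hα' : ContDiff ℝ (n + 2) α := hα.of_le (by gcongr; norm_num)
  exact ((contDiff_curvature hα' hκ).pow 2).add ((contDiff_torsion hα hκ).pow 2)

theorem contDiff_altCurvature (hα : ContDiff ℝ (n + 3) α) (hκ : ∀ s, curvature α s ≠ 0) :
    ContDiff ℝ n (altCurvature α) :=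
  (contDiff_curvature_sq_add_torsion_sq hα hκ).sqrt fun s =>
    (curvature_sq_add_torsion_sq_pos (hκ s)).ne'

theorem contDiff_altTorsion (hα : ContDiff ℝ (n + 4) α) (hκ : ∀ s, curvature α s ≠ 0) :
    ContDiff ℝ n (altTorsion α) := by
  have hα₂ : ContDiff ℝ (n + 2) α := hα.of_le (by gcongr; norm_num)
  have hα₃ : ContDiff ℝ (n + 3) α := hα.of_le (by gcongr; norm_num)
  have hα₄ : ContDiff ℝ (n + 1 + 3) α := by rwa [add_assoc, add_comm 1, three_add_one_eq_four]
  have hκ' : ContDiff ℝ (n + 1) (curvature α) :=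
    contDiff_curvature (hα₄.of_le (by gcongr; norm_num)) hκ
  exact (((contDiff_curvature hα₂ hκ).pow 2).div (contDiff_curvature_sq_add_torsion_sq hα₃ hκ)
    fun s => (curvature_sq_add_torsion_sq_pos (hκ s)).ne').mul
    ((contDiff_torsion hα₄ hκ).div hκ' hκ).deriv'

theorem isFrenetFrame_frenet (hα : ContDiff ℝ 3 α) (hunit : ∀ s, ‖deriv α s‖ = 1)
    (hκ : ∀ s, curvature α s ≠ 0) :
    IsFrenetFrame (deriv α) (principalNormal α) (binormal α) (curvature α) (torsion α) := by
  have hT' s : HasDerivAt (deriv α) (curvature α s • principalNormal α s) s := by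
    rw [principalNormal, smul_inv_smul₀ (hκ s)]
    exact ((hα.of_le (by norm_num : (2 : WithTop ℕ∞) ≤ 3)).differentiable_deriv_two s).hasDerivAt
  have hN s : ‖principalNormal α s‖ = 1 := by
    rw [principalNormal, curvature, norm_smul, norm_inv, norm_norm]
    exact inv_mul_cancel₀ (hκ s)
  have hTN s : ⟪deriv α s, principalNormal α s⟫ = 0 := by
    have h := inner_eq_zero_of_hasDerivAt_of_norm_eq (hT' s) hunit
    rw [real_inner_smul_right] at h
    exact (mul_eq_zero.1 h).resolve_left (hκ s)
  exact isFrenetFrame_cross3 hunit hN hTN hT'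
    ((contDiff_principalNormal (n := 1) (hα.of_le (by norm_num)) hκ).differentiable one_ne_zero)

theorem IsAngleFunction.altNormal_eq (hθ : IsAngleFunction α θ) {s : ℝ}
    (hκ : curvature α s ≠ 0) :
    altNormal α s = -Real.cos (θ s) • deriv α s + Real.sin (θ s) • binormal α s := by
  have hf : altCurvature α s ≠ 0 :=
    (Real.sqrt_pos.2 (curvature_sq_add_torsion_sq_pos hκ)).ne'
  rw [altNormal, ← altCurvature, inv_smul_eq_iff₀ hf, hθ.curvature_eq, hθ.torsion_eq]
  module

end Curve

end SpaceCurve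

open SpaceCurve in
theorem stmt_13_general {α : ℝ → EuclideanSpace ℝ (Fin 3)} {θ : ℝ → ℝ} (hα : ContDiff ℝ 5 α)
    (hunit : ∀ s, ‖deriv α s‖ = 1) (hκ : ∀ s, curvature α s ≠ 0) (hθ : IsAngleFunction α θ)
    {s v : ℝ}
    (hreg : v ^ 2 * altCurvature α s ^ 2 + (Real.sin (θ s) + v * altTorsion α s) ^ 2 ≠ 0) :
    meanCurvature (fun s v => α s + v • altNormal α s) s v =
      (v ^ 2 * (deriv (altCurvature α) s * altTorsion α s -
            altCurvature α s * deriv (altTorsion α) s) +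
          v * deriv (altCurvature α) s * Real.sin (θ s) +
          altCurvature α s * Real.sin (θ s) * Real.cos (θ s) -
          v * altCurvature α s * altTorsion α s * Real.cos (θ s)) /
        (2 * √(v ^ 2 * altCurvature α s ^ 2 +
          (Real.sin (θ s) + v * altTorsion α s) ^ 2) ^ 3) := by
  have hframe := (isFrenetFrame_frenet (hα.of_le (by norm_num)) hunit hκ).rotate
    hθ.hasDerivAt hθ.curvature_eq hθ.torsion_eq
  rw [← funext fun s => hθ.altNormal_eq (hκ s)] at hframe
  have hα' s : HasDerivAt α ((0 : ℝ) • principalNormal α s + -Real.cos (θ s) • altNormal α s +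
      Real.sin (θ s) •
        (Real.sin (θ s) • deriv α s + Real.cos (θ s) • binormal α s)) s := by
    refine (hα.differentiable (by norm_num) s).hasDerivAt.congr_deriv ?_
    rw [hθ.altNormal_eq (hκ s)]
    linear_combination (norm := module) (-Real.sin_sq_add_cos_sq (θ s)) • deriv α s
  have hf : DifferentiableAt ℝ (altCurvature α) s :=
    (contDiff_altCurvature (n := 2) (hα.of_le (by norm_num)) hκ).differentiable (by norm_num) s
  have hg : DifferentiableAt ℝ (altTorsion α) s :=
    (contDiff_altTorsion (n := 1) (hα.of_le (by norm_num)) hκ).differentiable (by norm_num) s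
  have hD : (0 - v * altCurvature α s) ^ 2 + (Real.sin (θ s) + v * altTorsion α s) ^ 2 =
      v ^ 2 * altCurvature α s ^ 2 + (Real.sin (θ s) + v * altTorsion α s) ^ 2 := by ring
  rw [← hD, hframe.meanCurvature_ruled hα' hf.hasDerivAt hg.hasDerivAt (hasDerivAt_const s 0)
    (hθ.hasDerivAt s).cos.neg (hθ.hasDerivAt s).sin (hD ▸ hreg)]
  congr 1
  ring

theorem stmt_13
    (α : ℝ → EuclideanSpace ℝ (Fin 3))
    (hα : ContDiff ℝ (⊤ : ℕ∞) α)
    (hunit : ∀ s, ‖deriv α s‖ = 1)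
    (T : ℝ → EuclideanSpace ℝ (Fin 3)) (hT : ∀ s, T s = deriv α s)
    (κ : ℝ → ℝ) (hκ : ∀ s, κ s = ‖deriv (deriv α) s‖) (hκpos : ∀ s, 0 < κ s)
    (N : ℝ → EuclideanSpace ℝ (Fin 3)) (hN : ∀ s, N s = (κ s)⁻¹ • deriv (deriv α) s)
    (B : ℝ → EuclideanSpace ℝ (Fin 3)) (hB : ∀ s, B s = cross3 (T s) (N s))
    (τ : ℝ → ℝ) (hτ : ∀ s, τ s = ⟪deriv N s, B s⟫)
    (f : ℝ → ℝ) (hf : ∀ s, f s = Real.sqrt (κ s ^ 2 + τ s ^ 2))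
    (g : ℝ → ℝ) (hg : ∀ s, g s = κ s ^ 2 / (κ s ^ 2 + τ s ^ 2) * deriv (fun u => τ u / κ u) s)
    (C : ℝ → EuclideanSpace ℝ (Fin 3))
    (hC : ∀ s, C s = (Real.sqrt (κ s ^ 2 + τ s ^ 2))⁻¹ • ((-κ s) • T s + τ s • B s))
    (W : ℝ → EuclideanSpace ℝ (Fin 3))
    (hW : ∀ s, W s = (Real.sqrt (κ s ^ 2 + τ s ^ 2))⁻¹ • (τ s • T s + κ s • B s))
    (θ : ℝ → ℝ) (hθdiff : Differentiable ℝ θ)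
    (hθderiv : ∀ s, deriv θ s = g s)
    (hθκ : ∀ s, κ s = f s * Real.cos (θ s))
    (hθτ : ∀ s, τ s = f s * Real.sin (θ s))
    (φs φv : ℝ → ℝ → EuclideanSpace ℝ (Fin 3))
    (hφs : ∀ s v, φs s v = deriv (fun u => α u + v • C u) s)
    (hφv : ∀ s v, φv s v = deriv (fun w => α s + w • C s) v)
    (φss φsv φvv : ℝ → ℝ → EuclideanSpace ℝ (Fin 3))
    (hφss : ∀ s v, φss s v = deriv (fun u => φs u v) s)
    (hφsv : ∀ s v, φsv s v = deriv (fun u => φv u v) s)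
    (hφvv : ∀ s v, φvv s v = deriv (fun w => φv s w) v)
    (EE FF GG LL MM NN : ℝ → ℝ → ℝ)
    (hEE : ∀ s v, EE s v = ‖φs s v‖ ^ 2)
    (hFF : ∀ s v, FF s v = ⟪φs s v, φv s v⟫)
    (hGG : ∀ s v, GG s v = ‖φv s v‖ ^ 2)
    (hLL : ∀ s v, LL s v =
      det3 (φs s v) (φv s v) (φss s v) / Real.sqrt (EE s v * GG s v - FF s v ^ 2))
    (hMM : ∀ s v, MM s v =
      det3 (φs s v) (φv s v) (φsv s v) / Real.sqrt (EE s v * GG s v - FF s v ^ 2))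
    (hNN : ∀ s v, NN s v =
      det3 (φs s v) (φv s v) (φvv s v) / Real.sqrt (EE s v * GG s v - FF s v ^ 2)) :
    ∀ (s v : ℝ),
      v ^ 2 * f s ^ 2 + (Real.sin (θ s) + v * g s) ^ 2 ≠ 0 →
      (EE s v * NN s v - 2 * FF s v * MM s v + GG s v * LL s v) /
          (2 * (EE s v * GG s v - FF s v ^ 2)) =
        (v ^ 2 * (deriv f s * g s - f s * deriv g s) + v * deriv f s * Real.sin (θ s) +
            f s * Real.sin (θ s) * Real.cos (θ s) - v * f s * g s * Real.cos (θ s)) /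
          (2 * Real.sqrt (v ^ 2 * f s ^ 2 + (Real.sin (θ s) + v * g s) ^ 2) ^ 3) := by
  obtain rfl : T = deriv α := funext hT
  obtain rfl : κ = SpaceCurve.curvature α := funext hκ
  obtain rfl : N = SpaceCurve.principalNormal α := funext hN
  obtain rfl : B = SpaceCurve.binormal α := funext hB
  obtain rfl : τ = SpaceCurve.torsion α := funext hτ
  obtain rfl : f = SpaceCurve.altCurvature α := funext hf
  obtain rfl : g = SpaceCurve.altTorsion α := funext hg
  obtain rfl : C = SpaceCurve.altNormal α := funext hC
  have hθ : SpaceCurve.IsAngleFunction α θ :=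
    ⟨fun s => hθderiv s ▸ (hθdiff s).hasDerivAt, hθκ, hθτ⟩
  intro s v hreg
  simp only [hLL, hMM, hNN, hEE, hFF, hGG, hφss, hφsv, hφvv, hφs, hφv]
  exact stmt_13_general (hα.of_le (by norm_cast)) hunit (fun s => (hκpos s).ne') hθ hreg
end

section
/- Let n_α(s) = −N(s) (the surface normal of the C-ruled surface along the base curve α, at v = 0). Then for all s ∈ ℝ: the geodesic curvature ⟨n_α(s) × T(s), T′(s)⟩ = 0, the normal curvature ⟨α″(s), n_α(s)⟩ = −κ(s) = −f(s)·cos θ(s) for any angle function θ, and the geodesic torsion ⟨n_α(s) × n_α′(s), T′(s)⟩ = 0. In particular, the normal curvature is nowhere zero, so the base curve α is a geodesic of the C-ruled surface but never an asymptotic line. -/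
open RealInnerProductSpace

/-!
The surface normal `-N` along the base curve is a multiple of the acceleration: `T' = κN`. Hence
`-N × v` is orthogonal to `T'` for every vector `v`. Taking `v = T` and `v = (-N)'` shows that the
geodesic curvature and the geodesic torsion vanish, while the normal curvature is the coefficient
`-κ` of the acceleration along the unit vector `-N`.
-/

/-- The geodesic curvature, at parameter `s`, of a unit-speed curve lying on a surface in `ℝ³`. The
curve enters through its unit tangent field `T` and the surface through its unit normal `n` along
the curve; the formula does not normalize `n` or `T`. -/
noncomputable def geodesicCurvature (n T : ℝ → EuclideanSpace ℝ (Fin 3)) (s : ℝ) : ℝ :=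
  ⟪cross3 (n s) (T s), deriv T s⟫

/-- The geodesic torsion, at parameter `s`, of a unit-speed curve lying on a surface in `ℝ³`, with
`n` and `T` as in `geodesicCurvature`. -/
noncomputable def geodesicTorsion (n T : ℝ → EuclideanSpace ℝ (Fin 3)) (s : ℝ) : ℝ :=
  ⟪cross3 (n s) (deriv n s), deriv T s⟫

/-- The normal curvature, at parameter `s`, of a unit-speed curve `β` lying on a hypersurface with
unit normal `n` along `β`. -/
noncomputable def normalCurvature {E : Type*} [NormedAddCommGroup E] [InnerProductSpace ℝ E]
    (n β : ℝ → E) (s : ℝ) : ℝ :=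
  ⟪deriv (deriv β) s, n s⟫

theorem inner_cross3_self (u v : EuclideanSpace ℝ (Fin 3)) : ⟪cross3 u v, u⟫ = 0 :=
  dot_self_cross u.ofLp v.ofLp

section ParallelToNormal

variable {n T : ℝ → EuclideanSpace ℝ (Fin 3)} {s c : ℝ}

theorem geodesicCurvature_eq_zero_of_deriv_eq_smul (h : deriv T s = c • n s) :
    geodesicCurvature n T s = 0 := by
  rw [geodesicCurvature, h, real_inner_smul_right, inner_cross3_self, mul_zero]

theorem geodesicTorsion_eq_zero_of_deriv_eq_smul (h : deriv T s = c • n s) :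
    geodesicTorsion n T s = 0 := by
  rw [geodesicTorsion, h, real_inner_smul_right, inner_cross3_self, mul_zero]

end ParallelToNormal

theorem normalCurvature_eq_of_deriv_deriv_eq_smul {E : Type*} [NormedAddCommGroup E]
    [InnerProductSpace ℝ E] {n β : ℝ → E} {s c : ℝ} (hn : ‖n s‖ = 1)
    (h : deriv (deriv β) s = c • n s) : normalCurvature n β s = c := by
  rw [normalCurvature, h, real_inner_smul_left, real_inner_self_eq_norm_sq, hn, one_pow, mul_one]

theorem stmt_15_general {α n : ℝ → EuclideanSpace ℝ (Fin 3)} {s : ℝ}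
    (hα : deriv (deriv α) s ≠ 0) (hn : n s = -NormedSpace.normalize (deriv (deriv α) s)) :
    geodesicCurvature n (deriv α) s = 0 ∧
      normalCurvature n α s = -‖deriv (deriv α) s‖ ∧
      geodesicTorsion n (deriv α) s = 0 ∧
      normalCurvature n α s ≠ 0 := by
  have hunit : ‖n s‖ = 1 := by rw [hn, norm_neg, NormedSpace.norm_normalize hα]
  have hacc : deriv (deriv α) s = -‖deriv (deriv α) s‖ • n s := by
    rw [hn, neg_smul_neg, NormedSpace.norm_smul_normalize]
  have hnormal : normalCurvature n α s = -‖deriv (deriv α) s‖ :=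
    normalCurvature_eq_of_deriv_deriv_eq_smul hunit hacc
  exact ⟨geodesicCurvature_eq_zero_of_deriv_eq_smul hacc, hnormal,
    geodesicTorsion_eq_zero_of_deriv_eq_smul hacc,
    hnormal ▸ neg_ne_zero.mpr (norm_ne_zero_iff.mpr hα)⟩

theorem stmt_15
    (α : ℝ → EuclideanSpace ℝ (Fin 3))
    (hα : ContDiff ℝ (⊤ : ℕ∞) α)
    (hunit : ∀ s, ‖deriv α s‖ = 1)
    (T : ℝ → EuclideanSpace ℝ (Fin 3)) (hT : ∀ s, T s = deriv α s)
    (κ : ℝ → ℝ) (hκ : ∀ s, κ s = ‖deriv (deriv α) s‖) (hκpos : ∀ s, 0 < κ s)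
    (N : ℝ → EuclideanSpace ℝ (Fin 3)) (hN : ∀ s, N s = (κ s)⁻¹ • deriv (deriv α) s)
    (B : ℝ → EuclideanSpace ℝ (Fin 3)) (hB : ∀ s, B s = cross3 (T s) (N s))
    (τ : ℝ → ℝ) (hτ : ∀ s, τ s = ⟪deriv N s, B s⟫)
    (f : ℝ → ℝ) (hf : ∀ s, f s = Real.sqrt (κ s ^ 2 + τ s ^ 2))
    (g : ℝ → ℝ) (hg : ∀ s, g s = κ s ^ 2 / (κ s ^ 2 + τ s ^ 2) * deriv (fun u => τ u / κ u) s)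
    (C : ℝ → EuclideanSpace ℝ (Fin 3))
    (hC : ∀ s, C s = (Real.sqrt (κ s ^ 2 + τ s ^ 2))⁻¹ • ((-κ s) • T s + τ s • B s))
    (W : ℝ → EuclideanSpace ℝ (Fin 3))
    (hW : ∀ s, W s = (Real.sqrt (κ s ^ 2 + τ s ^ 2))⁻¹ • (τ s • T s + κ s • B s))
    (θ : ℝ → ℝ) (hθdiff : Differentiable ℝ θ)
    (hθderiv : ∀ s, deriv θ s = g s)
    (hθκ : ∀ s, κ s = f s * Real.cos (θ s))
    (hθτ : ∀ s, τ s = f s * Real.sin (θ s))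
    (nα : ℝ → EuclideanSpace ℝ (Fin 3)) (hnα : ∀ s : ℝ, nα s = -N s) :
    ∀ s : ℝ,
      ⟪cross3 (nα s) (T s), deriv T s⟫ = 0 ∧
      ⟪deriv (deriv α) s, nα s⟫ = -κ s ∧
      ⟪deriv (deriv α) s, nα s⟫ = -(f s * Real.cos (θ s)) ∧
      ⟪cross3 (nα s) (deriv nα s), deriv T s⟫ = 0 ∧
      ⟪deriv (deriv α) s, nα s⟫ ≠ 0 := by
  obtain rfl : T = deriv α := funext hT
  intro s
  obtain ⟨hgeod, hnormal, htors, hne⟩ := stmt_15_general (n := nα)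
    (norm_pos_iff.mp (hκ s ▸ hκpos s)) (by rw [hnα, hN, hκ, NormedSpace.normalize])
  rw [← hκ] at hnormal
  exact ⟨hgeod, hnormal, hnormal.trans (congrArg Neg.neg (hθκ s)), htors, hne⟩
end
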